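/- Let d ≥ 3, let D ⊂ ℝ^d be a convex domain, p ∈ D, ξ ∈ ∂D, and let ε > 0 be such that δ̂_D(p, ξ−p) ≥ ε‖ξ−p‖. Then the curve σ : [0,+∞) → D given by σ(t) = ξ + e^{−2t}(p−ξ) satisfies |t−s| ≤ ρ_D(σ(s),σ(t)) ≤ 2ε^{−1}|t−s| for all s, t ≥ 0; in particular σ is a (2ε^{−1}, 0)-quasi-geodesic for ρ_D. -/

import Mathlib

/-!
*Lower bound.* A supporting hyperplane of the convex open set `D` at `ξ` gives a linear functional
`l` with `l y < l ξ` on `D`. Along a conformal harmonic disk `f` in `D`, the function `l ξ - l ∘ f`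
is positive and harmonic, hence the real part of a holomorphic function with values in a half-plane,
and the Borel–Carathéodory theorem bounds its gradient at `0` by twice its value. So
`g_D(x, v) ≥ |l v| / (2 (l ξ - l x))`, and integrating the logarithmic derivative of `l ξ - l ∘ γ`
along a curve `γ` bounds its minimal length from below by half the variation of `log (l ξ - l ∘ γ)`.
Since `l ξ - l (σ τ) = e^{-2τ} (l ξ - l p)`, this is `|t - s|` along the ray `σ`.

Bochner integrals of non-integrable functions are `0`, so the lower bound requires the length
integrand to be integrable for every competing curve. It is bounded because the curve is compact in
`D`, and measurable because `g_D` is upper semicontinuous on `D × ℝ^d`: a competing disk at `(x, v)`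
is shrunk slightly and then moved by a similarity close to the identity onto a competing disk at a
nearby `(x', v')`.

*Upper bound.* For `η < ε` there is a plane `Λ ∋ ξ - p` such that `D` contains the disk of radius
`η ‖ξ - p‖` about `p` in `p + Λ`. By convexity the homothety centred at `ξ` with ratio `e^{-2τ}`
maps it to a disk in `D` about `σ τ`, and the affine parametrisation of that disk bounds
`g_D(σ, σ')` by `2 / η`. Integrate along `σ` and let `η → ε`.
-/

open scoped RealInnerProductSpace ENNReal
open Metric Set Filter

noncomputable section

/-- Euclidean space `ℝ^d`. -/
abbrev Euc (d : ℕ) := EuclideanSpace ℝ (Fin d)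

/-- The open unit disk in `ℝ²`. -/
def unitDisk : Set (Euc 2) := Metric.ball 0 1

/-- Partial derivative of `f` at `z` in the `i`-th coordinate direction. -/
def pd {d : ℕ} (i : Fin 2) (f : Euc 2 → Euc d) (z : Euc 2) : Euc d :=
  fderiv ℝ f z (EuclideanSpace.single i 1)

/-- `f` is a conformal harmonic map on the unit disk: it is `C²`, its (vector)
Laplacian vanishes (equivalently, every component is harmonic), and at each point
its two partial derivatives are orthogonal and of equal norm. -/
def ConformalHarmonicOnDisk {d : ℕ} (f : Euc 2 → Euc d) : Prop :=
  ContDiffOn ℝ 2 f unitDisk ∧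
  (∀ z ∈ unitDisk,
    fderiv ℝ (pd 0 f) z (EuclideanSpace.single 0 1)
      + fderiv ℝ (pd 1 f) z (EuclideanSpace.single 1 1) = 0) ∧
  (∀ z ∈ unitDisk, ‖pd 0 f z‖ = ‖pd 1 f z‖ ∧ ⟪pd 0 f z, pd 1 f z⟫ = 0)

/-- The minimal (Forstnerič–Kalaj) metric of a domain `D ⊆ ℝ^d`:
`g_D(x,v) = inf {1/r : r > 0, f ∈ CH(𝔻, D), f 0 = x, f_x 0 = r • v}`. -/
def minMetric {d : ℕ} (D : Set (Euc d)) (x v : Euc d) : ℝ :=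
  sInf {c : ℝ | ∃ r : ℝ, 0 < r ∧ c = 1 / r ∧
    ∃ f : Euc 2 → Euc d, ConformalHarmonicOnDisk f ∧ (∀ z ∈ unitDisk, f z ∈ D) ∧
      f 0 = x ∧ pd 0 f 0 = r • v}

/-- `γ` is a piecewise `C¹` curve on `[a, b]`. -/
def PiecewiseC1On {d : ℕ} (γ : ℝ → Euc d) (a b : ℝ) : Prop :=
  ContinuousOn γ (Set.Icc a b) ∧
  ∃ (n : ℕ) (t : Fin (n + 2) → ℝ), Monotone t ∧ t 0 = a ∧ t (Fin.last (n + 1)) = b ∧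
    ∀ i : Fin (n + 1), ContDiffOn ℝ 1 γ (Set.Icc (t i.castSucc) (t i.succ))

/-- The minimal pseudodistance `ρ_D`: infimum of minimal lengths of piecewise `C¹`
curves in `D` joining `x` to `y`. -/
def minDist {d : ℕ} (D : Set (Euc d)) (x y : Euc d) : ℝ :=
  sInf {L : ℝ | ∃ γ : ℝ → Euc d, PiecewiseC1On γ 0 1 ∧
    (∀ t ∈ Set.Icc (0:ℝ) 1, γ t ∈ D) ∧ γ 0 = x ∧ γ 1 = y ∧
    L = ∫ t in (0:ℝ)..(1:ℝ), minMetric D (γ t) (deriv γ t)}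

/-- The Gromov product `(x|y)_o` with respect to the minimal pseudodistance of `D`. -/
def gromovProd {d : ℕ} (D : Set (Euc d)) (o x y : Euc d) : ℝ :=
  (minDist D x o + minDist D y o - minDist D x y) / 2

/-- `D` is hyperbolic: the minimal pseudodistance is a genuine distance. -/
def MinHyperbolic {d : ℕ} (D : Set (Euc d)) : Prop :=
  ∀ x ∈ D, ∀ y ∈ D, x ≠ y → 0 < minDist D x y

/-- The Hessian quadratic form of `u` at `x` in direction `v`. -/
def hessQ {d : ℕ} (u : Euc d → ℝ) (x v : Euc d) : ℝ :=
  fderiv ℝ (fun y => fderiv ℝ u y v) x v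

/-- `D` is a bounded domain with `C²` boundary, described by a `C²` defining
function `u` on a neighborhood `U` of `∂D` with nonvanishing differential. -/
def IsC2BoundedDomain {d : ℕ} (D : Set (Euc d)) : Prop :=
  IsOpen D ∧ IsConnected D ∧ Bornology.IsBounded D ∧
  ∃ (U : Set (Euc d)) (u : Euc d → ℝ), IsOpen U ∧ frontier D ⊆ U ∧ ContDiffOn ℝ 2 u U ∧
    D ∩ U = {x | x ∈ U ∧ u x < 0} ∧ frontier D = {x | x ∈ U ∧ u x = 0} ∧
    ∀ x ∈ frontier D, fderiv ℝ u x ≠ 0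

/-- `D` is a bounded strongly minimally convex domain: it has a `C²` defining function
which is strongly minimally plurisubharmonic near `∂D`, i.e. the trace of its Hessian
on every 2-plane (spanned by an orthonormal pair `v, w`) is strictly positive. -/
def IsStronglyMinimallyConvex {d : ℕ} (D : Set (Euc d)) : Prop :=
  IsOpen D ∧ IsConnected D ∧ Bornology.IsBounded D ∧
  ∃ (U : Set (Euc d)) (u : Euc d → ℝ), IsOpen U ∧ frontier D ⊆ U ∧ ContDiffOn ℝ 2 u U ∧
    D ∩ U = {x | x ∈ U ∧ u x < 0} ∧ frontier D = {x | x ∈ U ∧ u x = 0} ∧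
    (∀ x ∈ frontier D, fderiv ℝ u x ≠ 0) ∧
    (∀ x ∈ U, ∀ v w : Euc d, ‖v‖ = 1 → ‖w‖ = 1 → ⟪v, w⟫ = 0 →
      0 < hessQ u x v + hessQ u x w)

/-- `D` is a bounded strongly convex domain: convex, with a `C²` defining function whose
Hessian is positive definite on the tangent space at every boundary point
(equivalently, all principal curvatures of `∂D` w.r.t. the inner normal are positive). -/
def IsStronglyConvexDomain {d : ℕ} (D : Set (Euc d)) : Prop :=
  IsOpen D ∧ IsConnected D ∧ Bornology.IsBounded D ∧ Convex ℝ D ∧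
  ∃ (U : Set (Euc d)) (u : Euc d → ℝ), IsOpen U ∧ frontier D ⊆ U ∧ ContDiffOn ℝ 2 u U ∧
    D ∩ U = {x | x ∈ U ∧ u x < 0} ∧ frontier D = {x | x ∈ U ∧ u x = 0} ∧
    (∀ x ∈ frontier D, fderiv ℝ u x ≠ 0) ∧
    (∀ ξ ∈ frontier D, ∀ w : Euc d, w ≠ 0 → fderiv ℝ u ξ w = 0 → 0 < hessQ u ξ w)

/-- For `x ∈ D` with nearest boundary point `p`, the outer unit normal direction
`n_{π(x)} = (p - x)/‖p - x‖`. -/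
def nvec {d : ℕ} (x p : Euc d) : Euc d := ‖p - x‖⁻¹ • (p - x)

/-- Normal component of `v` at `x` with nearest boundary point `p`. -/
def vN {d : ℕ} (x p v : Euc d) : Euc d := ⟪v, nvec x p⟫ • nvec x p

/-- Tangential component of `v` at `x` with nearest boundary point `p`. -/
def vT {d : ℕ} (x p v : Euc d) : Euc d := v - vN x p v

/-- The intrinsic distance `H` on the boundary `∂D`: infimum of Euclidean lengths of
piecewise `C¹` curves in `∂D` joining two boundary points. -/
def bdist {d : ℕ} (D : Set (Euc d)) (ξ η : Euc d) : ℝ :=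
  sInf {L : ℝ | ∃ α : ℝ → Euc d, PiecewiseC1On α 0 1 ∧
    (∀ t ∈ Set.Icc (0:ℝ) 1, α t ∈ frontier D) ∧ α 0 = ξ ∧ α 1 = η ∧
    L = ∫ t in (0:ℝ)..(1:ℝ), ‖deriv α t‖}

/-- `h(x) = δ_D(x)^{1/2}`. -/
def hfun {d : ℕ} (D : Set (Euc d)) (x : Euc d) : ℝ :=
  Real.sqrt (Metric.infDist x (frontier D))

/-- The length of a curve with respect to the boundary Finsler metric
`F(x,v) = ‖v_N‖/(2 δ_D(x)) + ‖v_T‖/δ_D(x)^{1/2}`. -/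
def Flen {d : ℕ} (D : Set (Euc d)) (π : Euc d → Euc d) (γ : ℝ → Euc d) : ℝ :=
  ∫ t in (0:ℝ)..(1:ℝ),
    (‖vN (γ t) (π (γ t)) (deriv γ t)‖ / (2 * Metric.infDist (γ t) (frontier D))
      + ‖vT (γ t) (π (γ t)) (deriv γ t)‖ / Real.sqrt (Metric.infDist (γ t) (frontier D)))

/-- The filling Finsler metric `F`: the boundary Finsler metric on
`N = {δ_D ≤ ε}` and `c‖v‖` elsewhere. -/
def Fmet {d : ℕ} (D : Set (Euc d)) (π : Euc d → Euc d) (ε c : ℝ) (x v : Euc d) : ℝ :=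
  if Metric.infDist x (frontier D) ≤ ε then
    ‖vN x (π x) v‖ / (2 * Metric.infDist x (frontier D))
      + ‖vT x (π x) v‖ / Real.sqrt (Metric.infDist x (frontier D))
  else c * ‖v‖

/-- The intrinsic distance `d_F` associated to the filling Finsler metric `F`. -/
def dF {d : ℕ} (D : Set (Euc d)) (π : Euc d → Euc d) (ε c : ℝ) (x y : Euc d) : ℝ :=
  sInf {L : ℝ | ∃ γ : ℝ → Euc d, PiecewiseC1On γ 0 1 ∧
    (∀ t ∈ Set.Icc (0:ℝ) 1, γ t ∈ D) ∧ γ 0 = x ∧ γ 1 = y ∧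
    L = ∫ t in (0:ℝ)..(1:ℝ), Fmet D π ε c (γ t) (deriv γ t)}

/-- The hyperbolic filling distance
`d_H(x,y) = 2 log((H(π x, π y) + h(x) ∨ h(y)) / √(h(x) h(y)))`. -/
def dH {d : ℕ} (D : Set (Euc d)) (π : Euc d → Euc d) (x y : Euc d) : ℝ :=
  2 * Real.log ((bdist D (π x) (π y) + max (hfun D x) (hfun D y)) /
    Real.sqrt (hfun D x * hfun D y))

/-- `δ̂_D(x,v)`: the supremum over 2-dimensional linear subspaces `Λ ∋ v` of the
distance (in `ℝ≥0∞`, so `∞` if `x + Λ ⊆ D`) from `x` to `(x + Λ) \ D`. -/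
def deltaHat {d : ℕ} (D : Set (Euc d)) (x v : Euc d) : ℝ≥0∞ :=
  ⨆ (Λ : Submodule ℝ (Euc d)) (_ : Module.finrank ℝ Λ = 2) (_ : v ∈ Λ),
    ⨅ (y : Euc d) (_ : y - x ∈ Λ ∧ y ∉ D), edist x y

/-- The positive parameter at which the ray `t ↦ x + t • v` exits the convex domain `D`
(equal to `0`, by the `sInf ∅ = 0` convention, when the ray stays in `D`,
i.e. when the corresponding chord endpoint is the point at infinity). -/
def chordParam {d : ℕ} (D : Set (Euc d)) (x v : Euc d) : ℝ :=
  sInf {s : ℝ | 0 < s ∧ x + s • v ∉ D}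

/-- The Hilbert Finsler metric `h_D(x,v) = (‖v‖/2)(1/‖x-a‖ + 1/‖x-b‖)` of a convex
domain, with the convention `1/‖x-∞‖ = 0` (here `‖x-b‖ = chordParam D x v • ‖v‖` and
`‖x-a‖ = chordParam D x (-v) • ‖v‖`, and division by zero is zero). -/
def hilbertFinsler {d : ℕ} (D : Set (Euc d)) (x v : Euc d) : ℝ :=
  (1/2) * (1 / chordParam D x v + 1 / chordParam D x (-v))

/- The Hilbert distance of a convex domain: for `x ≠ y`,
`H_D(x,y) = ½ log((‖x-b‖ ‖y-a‖)/(‖x-a‖ ‖y-b‖))` where `a, x, y, b` are aligned on the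
chord through `x, y`, with the convention that ratios involving the point at infinity
(detected by `chordParam = 0`) are equal to `1`. -/
open Classical in
def hilbertDist {d : ℕ} (D : Set (Euc d)) (x y : Euc d) : ℝ :=
  if x = y then 0 else
    (1/2) * Real.log
      ((if chordParam D x (y - x) = 0 then 1
        else chordParam D x (y - x) / (chordParam D x (y - x) - 1)) *
       (if chordParam D x (x - y) = 0 then 1
        else (1 + chordParam D x (x - y)) / chordParam D x (x - y)))

section LinearAlgebra

variable {E : Type*} [NormedAddCommGroup E] [InnerProductSpace ℝ E]

lemma exists_orthogonal_mem (Λ : Submodule ℝ E) (hΛ : 2 ≤ Module.finrank ℝ Λ) {v : E}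
    (hv : v ∈ Λ) : ∃ w ∈ Λ, ‖v‖ = ‖w‖ ∧ ⟪v, w⟫ = 0 := by
  have : FiniteDimensional ℝ Λ := Module.finite_of_finrank_pos (by omega)
  have hle : ℝ ∙ v ≤ Λ := (Submodule.span_singleton_le_iff_mem v Λ).2 hv
  have hne : (ℝ ∙ v)ᗮ ⊓ Λ ≠ ⊥ := by
    intro h
    have hdim := Submodule.finrank_add_inf_finrank_orthogonal hle
    have hline : Module.finrank ℝ (ℝ ∙ v) ≤ 1 := by
      simpa using finrank_span_le_card (R := ℝ) ({v} : Set E)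
    rw [h, finrank_bot] at hdim
    omega
  obtain ⟨w, ⟨hvw, hwΛ⟩, hw⟩ := Submodule.exists_mem_ne_zero_of_ne_bot hne
  refine ⟨(‖v‖ / ‖w‖) • w, Λ.smul_mem _ hwΛ, ?_, ?_⟩
  · rw [norm_smul, norm_div, norm_norm, norm_norm, div_mul_cancel₀ _ (norm_ne_zero_iff.2 hw)]
  · rw [inner_smul_right, Submodule.mem_orthogonal_singleton_iff_inner_right.1 hvw, mul_zero]

lemma norm_smul_add_smul_of_orthogonal {v w : E} (hvw : ‖v‖ = ‖w‖) (ho : ⟪v, w⟫ = 0)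
    (z : EuclideanSpace ℝ (Fin 2)) : ‖z 0 • v + z 1 • w‖ = ‖v‖ * ‖z‖ := by
  have ho' : ⟪z 0 • v, z 1 • w⟫ = 0 := by simp [inner_smul_left, inner_smul_right, ho]
  rw [← sq_eq_sq₀ (norm_nonneg _) (by positivity), sq, norm_add_sq_eq_norm_sq_add_norm_sq_real ho',
    mul_pow, EuclideanSpace.real_norm_sq_eq, Fin.sum_univ_two, norm_smul, norm_smul, ← hvw,
    Real.norm_eq_abs, Real.norm_eq_abs, ← sq_abs (z 0), ← sq_abs (z 1)]
  ring

end LinearAlgebra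

lemma isOpen_unitDisk : IsOpen unitDisk := isOpen_ball

lemma zero_mem_unitDisk : (0 : Euc 2) ∈ unitDisk := mem_ball_self one_pos

lemma mem_unitDisk_iff_norm_lt_one {z : Euc 2} : z ∈ unitDisk ↔ ‖z‖ < 1 := mem_ball_zero_iff

section Competitors

variable {d : ℕ} {D : Set (Euc d)} {x v : Euc d}

/-- `f` competes in the infimum defining `minMetric D x v` and contributes the value `1 / r`. -/
structure IsCompetitor (D : Set (Euc d)) (x v : Euc d) (r : ℝ) (f : Euc 2 → Euc d) : Prop where
  pos : 0 < r
  conformalHarmonic : ConformalHarmonicOnDisk f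
  mapsTo : MapsTo f unitDisk D
  map_zero : f 0 = x
  pd_zero : pd 0 f 0 = r • v

lemma minMetric_eq_sInf_isCompetitor (D : Set (Euc d)) (x v : Euc d) :
    minMetric D x v = sInf {c | ∃ r f, IsCompetitor D x v r f ∧ 1 / r = c} := by
  refine congrArg sInf (Set.ext fun c => ⟨?_, ?_⟩)
  · rintro ⟨r, hr, rfl, f, hf, hfD, hf0, hf1⟩
    exact ⟨r, f, ⟨hr, hf, hfD, hf0, hf1⟩, rfl⟩
  · rintro ⟨r, f, h, rfl⟩
    exact ⟨r, h.pos, rfl, f, h.conformalHarmonic, h.mapsTo, h.map_zero, h.pd_zero⟩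

lemma minMetric_nonneg (D : Set (Euc d)) (x v : Euc d) : 0 ≤ minMetric D x v := by
  rw [minMetric_eq_sInf_isCompetitor]
  refine Real.sInf_nonneg ?_
  rintro _ ⟨r, f, h, rfl⟩
  exact (one_div_pos.2 h.pos).le

lemma IsCompetitor.minMetric_le {r : ℝ} {f : Euc 2 → Euc d} (h : IsCompetitor D x v r f) :
    minMetric D x v ≤ 1 / r := by
  rw [minMetric_eq_sInf_isCompetitor]
  refine csInf_le ⟨0, ?_⟩ ⟨r, f, h, rfl⟩
  rintro _ ⟨r, f, h, rfl⟩
  exact (one_div_pos.2 h.pos).le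

/-- The affine map `z ↦ x + z₀ v + z₁ w` from the plane; it parametrises a round disk when `v` and
`w` are orthogonal of equal length. -/
def affineDisk (x v w : Euc d) (z : Euc 2) : Euc d := x + z 0 • v + z 1 • w

lemma fderiv_affineDisk (x v w : Euc d) (z : Euc 2) :
    fderiv ℝ (affineDisk x v w) z =
      (EuclideanSpace.proj (𝕜 := ℝ) (0 : Fin 2)).smulRight v
        + (EuclideanSpace.proj (𝕜 := ℝ) (1 : Fin 2)).smulRight w := by
  refine HasFDerivAt.fderiv (HasFDerivAt.add (HasFDerivAt.const_add x ?_) ?_)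
  · exact ((EuclideanSpace.proj (𝕜 := ℝ) (0 : Fin 2)).smulRight v).hasFDerivAt
  · exact ((EuclideanSpace.proj (𝕜 := ℝ) (1 : Fin 2)).smulRight w).hasFDerivAt

lemma pd_zero_affineDisk (x v w : Euc d) : pd 0 (affineDisk x v w) = fun _ => v := by
  ext1 z
  simp [pd, fderiv_affineDisk]

lemma pd_one_affineDisk (x v w : Euc d) : pd 1 (affineDisk x v w) = fun _ => w := by
  ext1 z
  simp [pd, fderiv_affineDisk]

lemma conformalHarmonicOnDisk_affineDisk (x : Euc d) {v w : Euc d} (hvw : ‖v‖ = ‖w‖)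
    (ho : ⟪v, w⟫ = 0) : ConformalHarmonicOnDisk (affineDisk x v w) := by
  refine ⟨ContDiff.contDiffOn (by unfold affineDisk; fun_prop), fun z _ => ?_, fun z _ => ?_⟩
  · simp [pd_zero_affineDisk, pd_one_affineDisk]
  · simp only [pd_zero_affineDisk, pd_one_affineDisk]
    exact ⟨hvw, ho⟩

variable {Λ : Submodule ℝ (Euc d)} {R : ℝ}

lemma exists_isCompetitor_of_plane (hΛ : 2 ≤ Module.finrank ℝ Λ) (hv : v ∈ Λ)
    (hD : ∀ y ∈ Λ, ‖y‖ < R → x + y ∈ D) (hR : 0 < R) {r : ℝ} (hr : 0 < r) (hrR : r * ‖v‖ ≤ R) :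
    ∃ f, IsCompetitor D x v r f := by
  obtain ⟨w, hwΛ, hvw, ho⟩ := exists_orthogonal_mem Λ hΛ hv
  have hvw' : ‖r • v‖ = ‖r • w‖ := by rw [norm_smul, norm_smul, hvw]
  have ho' : ⟪r • v, r • w⟫ = 0 := by simp [inner_smul_left, inner_smul_right, ho]
  refine ⟨affineDisk x (r • v) (r • w), hr, conformalHarmonicOnDisk_affineDisk x hvw' ho',
    fun z hz => ?_, by simp [affineDisk], by simp only [pd_zero_affineDisk]⟩
  rw [affineDisk, add_assoc]
  refine hD _ (Λ.add_mem (Λ.smul_mem _ (Λ.smul_mem _ hv)) (Λ.smul_mem _ (Λ.smul_mem _ hwΛ))) ?_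
  rw [norm_smul_add_smul_of_orthogonal hvw' ho', norm_smul, Real.norm_of_nonneg hr.le]
  rw [mem_unitDisk_iff_norm_lt_one] at hz
  nlinarith [norm_nonneg z]

lemma minMetric_le_of_plane (hΛ : 2 ≤ Module.finrank ℝ Λ) (hv : v ∈ Λ)
    (hD : ∀ y ∈ Λ, ‖y‖ < R → x + y ∈ D) (hR : 0 < R) : minMetric D x v ≤ ‖v‖ / R := by
  refine le_of_forall_gt_imp_ge_of_dense fun c hc => ?_
  have hc0 : 0 < c := (by positivity : 0 ≤ ‖v‖ / R).trans_lt hc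
  have hcR : c⁻¹ * ‖v‖ ≤ R := by
    rw [div_lt_iff₀ hR] at hc
    rw [inv_mul_le_iff₀ hc0]
    exact hc.le
  obtain ⟨f, hf⟩ := exists_isCompetitor_of_plane hΛ hv hD hR (inv_pos.2 hc0) hcR
  simpa using hf.minMetric_le

lemma minMetric_le_of_ball_subset (hd : 2 ≤ d) (hR : 0 < R) (hD : ball x R ⊆ D) (v : Euc d) :
    minMetric D x v ≤ ‖v‖ / R :=
  minMetric_le_of_plane (Λ := ⊤) (by simpa using hd) Submodule.mem_top
    (fun y _ hy => hD (by simpa using hy)) hR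

lemma exists_isCompetitor (hd : 2 ≤ d) (hD : IsOpen D) (hx : x ∈ D) (v : Euc d) :
    ∃ r f, IsCompetitor D x v r f := by
  obtain ⟨R, hR, hball⟩ := Metric.isOpen_iff.1 hD x hx
  refine ⟨R / (‖v‖ + 1), exists_isCompetitor_of_plane (Λ := ⊤) (by simpa using hd)
    Submodule.mem_top (fun y _ hy => hball (by simpa using hy)) hR (by positivity) ?_⟩
  rw [div_mul_eq_mul_div, div_le_iff₀ (by positivity)]
  nlinarith

lemma le_minMetric (hd : 2 ≤ d) (hD : IsOpen D) (hx : x ∈ D) {c : ℝ}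
    (hc : ∀ r f, IsCompetitor D x v r f → c ≤ 1 / r) : c ≤ minMetric D x v := by
  rw [minMetric_eq_sInf_isCompetitor]
  obtain ⟨r, f, hf⟩ := exists_isCompetitor hd hD hx v
  refine le_csInf ⟨1 / r, r, f, hf, rfl⟩ ?_
  rintro _ ⟨r, f, hf, rfl⟩
  exact hc r f hf

lemma exists_isCompetitor_of_minMetric_lt (hd : 2 ≤ d) (hD : IsOpen D) (hx : x ∈ D) {c : ℝ}
    (hc : minMetric D x v < c) : ∃ r f, IsCompetitor D x v r f ∧ 1 / r < c := by
  by_contra! h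
  exact hc.not_ge (le_minMetric hd hD hx h)

end Competitors

section Harmonic

open InnerProductSpace Laplacian

variable {E E' F : Type*} [NormedAddCommGroup E] [InnerProductSpace ℝ E] [FiniteDimensional ℝ E]
  [NormedAddCommGroup E'] [InnerProductSpace ℝ E'] [FiniteDimensional ℝ E']
  [NormedAddCommGroup F] [NormedSpace ℝ F]

lemma laplacian_comp_smul_linearIsometryEquiv (f : E → F) (e : E' ≃ₗᵢ[ℝ] E) {ρ : ℝ} (hρ : ρ ≠ 0)
    (x : E') : Δ (fun y => f (ρ • e y)) x = ρ ^ 2 • Δ f (ρ • e x) := by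
  let g : E' ≃L[ℝ] E :=
    e.toContinuousLinearEquiv.trans (ContinuousLinearEquiv.smulLeft (Units.mk0 ρ hρ))
  have hcomp := g.iteratedFDerivWithin_comp_right f uniqueDiffOn_univ (mem_univ (g x)) 2
  rw [preimage_univ, iteratedFDerivWithin_univ, iteratedFDerivWithin_univ] at hcomp
  let b := stdOrthonormalBasis ℝ E'
  rw [laplacian_eq_iteratedFDeriv_orthonormalBasis _ b,
    laplacian_eq_iteratedFDeriv_orthonormalBasis f (b.map e), Finset.smul_sum]
  refine Finset.sum_congr rfl fun i _ => ?_
  have hscale : (fun j => g (![b i, b i] j)) = fun j => ρ • ![b.map e i, b.map e i] j := by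
    ext1 j
    fin_cases j <;> simp [g]
  calc iteratedFDeriv ℝ 2 (f ∘ g) x ![b i, b i]
      = iteratedFDeriv ℝ 2 f (g x) (fun j => g (![b i, b i] j)) := by rw [hcomp]; rfl
    _ = ρ ^ 2 • iteratedFDeriv ℝ 2 f (g x) ![b.map e i, b.map e i] := by
      rw [hscale, ContinuousMultilinearMap.map_smul_univ, Fin.prod_const]

lemma harmonicAt_comp_smul_linearIsometryEquiv {f : E → F} (e : E' ≃ₗᵢ[ℝ] E) {ρ : ℝ} (hρ : ρ ≠ 0)
    {x : E'} (hf : HarmonicAt f (ρ • e x)) : HarmonicAt (fun y => f (ρ • e y)) x := by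
  have hg : Continuous fun y => ρ • e y := e.continuous.const_smul ρ
  refine ⟨hf.1.comp x (e.contDiff.const_smul ρ).contDiffAt, ?_⟩
  filter_upwards [hg.continuousAt.eventually hf.2] with y hy
  simp [laplacian_comp_smul_linearIsometryEquiv f e hρ, hy]

lemma laplacian_eq_pd {d : ℕ} {f : Euc 2 → Euc d} {z : Euc 2} (hf : ContDiffAt ℝ 2 f z) :
    Δ f z = fderiv ℝ (pd 0 f) z (EuclideanSpace.single 0 1)
      + fderiv ℝ (pd 1 f) z (EuclideanSpace.single 1 1) := by
  have hf' : DifferentiableAt ℝ (fderiv ℝ f) z :=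
    (hf.fderiv_right (m := 1) (by norm_num)).differentiableAt one_ne_zero
  have hpd (i : Fin 2) : fderiv ℝ (pd i f) z (EuclideanSpace.single i 1)
      = fderiv ℝ (fderiv ℝ f) z (EuclideanSpace.single i 1) (EuclideanSpace.single i 1) := by
    unfold pd
    simp [fderiv_clm_apply hf' (differentiableAt_const _)]
  simp [laplacian_eq_iteratedFDeriv_orthonormalBasis f (EuclideanSpace.basisFun (Fin 2) ℝ),
    iteratedFDeriv_two_apply, hpd]

lemma conformalHarmonicOnDisk_iff {d : ℕ} {f : Euc 2 → Euc d} :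
    ConformalHarmonicOnDisk f ↔ HarmonicOnNhd f unitDisk ∧
      ∀ z ∈ unitDisk, ‖pd 0 f z‖ = ‖pd 1 f z‖ ∧ ⟪pd 0 f z, pd 1 f z⟫ = 0 := by
  have hnhds {z} (hz : z ∈ unitDisk) : unitDisk ∈ nhds z := isOpen_unitDisk.mem_nhds hz
  constructor
  · rintro ⟨hC, hΔ, hconf⟩
    refine ⟨fun z hz => ⟨hC.contDiffAt (hnhds hz), ?_⟩, hconf⟩
    filter_upwards [hnhds hz] with y hy
    rw [laplacian_eq_pd (hC.contDiffAt (hnhds hy)), hΔ y hy, Pi.zero_apply]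
  · rintro ⟨hf, hconf⟩
    refine ⟨hf.contDiffOn, fun z hz => ?_, hconf⟩
    rw [← laplacian_eq_pd (hf z hz).1]
    exact (hf z hz).2.self_of_nhds

end Harmonic

section CompetitorOperations

open InnerProductSpace

variable {d : ℕ} {f : Euc 2 → Euc d}

lemma ConformalHarmonicOnDisk.harmonicOnNhd (hf : ConformalHarmonicOnDisk f) :
    HarmonicOnNhd f unitDisk :=
  (conformalHarmonicOnDisk_iff.1 hf).1

lemma ConformalHarmonicOnDisk.differentiableAt (hf : ConformalHarmonicOnDisk f) {z : Euc 2}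
    (hz : z ∈ unitDisk) : DifferentiableAt ℝ f z :=
  (hf.harmonicOnNhd z hz).1.differentiableAt two_ne_zero

lemma ConformalHarmonicOnDisk.continuousAt (hf : ConformalHarmonicOnDisk f) {z : Euc 2}
    (hz : z ∈ unitDisk) : ContinuousAt f z :=
  (hf.differentiableAt hz).continuousAt

lemma pd_comp_smul (i : Fin 2) (f : Euc 2 → Euc d) (ρ : ℝ) (z : Euc 2) :
    pd i (fun y => f (ρ • y)) z = ρ • pd i f (ρ • z) := by
  simp [pd, fderiv_comp_smul]

lemma pd_add_smul_sub (i : Fin 2) {z : Euc 2} (hf : DifferentiableAt ℝ f z) (x' x : Euc d) (k : ℝ)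
    (A : Euc d ≃ₗᵢ[ℝ] Euc d) : pd i (fun y => x' + k • A (f y - x)) z = k • A (pd i f z) := by
  have hA := (A.toContinuousLinearEquiv : Euc d →L[ℝ] Euc d).hasFDerivAt.comp z
    (hf.hasFDerivAt.sub_const x)
  exact DFunLike.congr_fun ((hA.const_smul k).const_add x').fderiv _

lemma smul_mem_unitDisk {ρ : ℝ} (hρ : |ρ| ≤ 1) {z : Euc 2} (hz : z ∈ unitDisk) :
    ρ • z ∈ unitDisk := by
  rw [mem_unitDisk_iff_norm_lt_one] at hz ⊢
  rw [norm_smul, Real.norm_eq_abs]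
  nlinarith [norm_nonneg z]

lemma ConformalHarmonicOnDisk.comp_smul (hf : ConformalHarmonicOnDisk f) {ρ : ℝ} (hρ : ρ ≠ 0)
    (hρ1 : |ρ| ≤ 1) : ConformalHarmonicOnDisk fun z => f (ρ • z) := by
  refine conformalHarmonicOnDisk_iff.2 ⟨fun z hz => ?_, fun z hz => ?_⟩
  · exact harmonicAt_comp_smul_linearIsometryEquiv (LinearIsometryEquiv.refl ℝ (Euc 2)) hρ
      (hf.harmonicOnNhd _ (smul_mem_unitDisk hρ1 hz))
  · obtain ⟨hnorm, horth⟩ := hf.2.2 _ (smul_mem_unitDisk hρ1 hz)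
    simp [pd_comp_smul, norm_smul, inner_smul_left, inner_smul_right, hnorm, horth]

lemma ConformalHarmonicOnDisk.add_smul_sub (hf : ConformalHarmonicOnDisk f) (x' x : Euc d) (k : ℝ)
    (A : Euc d ≃ₗᵢ[ℝ] Euc d) : ConformalHarmonicOnDisk fun z => x' + k • A (f z - x) := by
  refine conformalHarmonicOnDisk_iff.2 ⟨?_, fun z hz => ?_⟩
  · exact (harmonicOnNhd_const x').add (((hf.harmonicOnNhd.sub (harmonicOnNhd_const x)).comp_CLM
      (A.toContinuousLinearEquiv : Euc d →L[ℝ] Euc d)).const_smul)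
  · obtain ⟨hnorm, horth⟩ := hf.2.2 z hz
    simp only [pd_add_smul_sub _ (hf.differentiableAt hz)]
    simp [norm_smul, inner_smul_left, inner_smul_right, hnorm, horth]

end CompetitorOperations

section FrameSimilarity

variable {E : Type*} [NormedAddCommGroup E] [InnerProductSpace ℝ E]

lemma continuousAt_reflection_singleton {X : Type*} [TopologicalSpace X] {a b : X → E} {p : X}
    (ha : ContinuousAt a p) (hb : ContinuousAt b p) (hp : a p ≠ 0) :
    ContinuousAt (fun q => (ℝ ∙ a q).reflection (b q)) p := by
  have hcoeff : ContinuousAt (fun q => ⟪a q, b q⟫ / ‖a q‖ ^ 2) p :=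
    (ha.inner hb).div (ha.norm.pow 2) (pow_ne_zero 2 (norm_ne_zero_iff.2 hp))
  simp only [Submodule.reflection_singleton_apply]
  exact ((hcoeff.smul ha).const_smul 2).sub hb

/-- The isometry obtained by reflecting in the line of `v` and then in the line of
`‖v'‖ v + ‖v‖ v'`. For `v ≠ 0` it carries the direction of `v` to that of `v'`, it is the identity
when `v' = v`, and it is continuous in `v'` near `v`. -/
def directionRotation (v v' : E) : E ≃ₗᵢ[ℝ] E :=
  (ℝ ∙ v).reflection.trans (ℝ ∙ (‖v'‖ • v + ‖v‖ • v')).reflection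

lemma directionRotation_apply (v v' y : E) : directionRotation v v' y =
    (ℝ ∙ (‖v'‖ • v + ‖v‖ • v')).reflection ((ℝ ∙ v).reflection y) :=
  LinearIsometryEquiv.trans_apply _ _ _

lemma norm_smul_directionRotation_self (v v' : E) :
    ‖v'‖ • directionRotation v v' v = ‖v‖ • v' := by
  have hfix : (ℝ ∙ v).reflection v = v :=
    (Submodule.reflection_eq_self_iff v).2 (Submodule.mem_span_singleton_self v)
  have hswap := Submodule.reflection_sub (v := ‖v'‖ • v) (w := -(‖v‖ • v'))
    (by simp [norm_smul, mul_comm])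
  rw [sub_neg_eq_add, Submodule.reflection_orthogonal_apply, neg_inj] at hswap
  rw [directionRotation_apply, hfix, ← map_smul, hswap]

lemma directionRotation_self {v : E} (hv : v ≠ 0) (y : E) : directionRotation v v y = y := by
  have hspan : (ℝ ∙ (‖v‖ • v + ‖v‖ • v)) = ℝ ∙ v := by
    rw [← add_smul]
    exact Submodule.span_singleton_smul_eq (IsUnit.mk0 _ (by simpa using hv)) v
  simp [directionRotation_apply, hspan]

/-- For `v ≠ 0`, the similarity of `E` that carries the point `x` to `x'` and the direction `v` at
`x` to `v'`. -/
def frameSimilarity (x v x' v' y : E) : E := x' + (‖v'‖ / ‖v‖) • directionRotation v v' (y - x)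

lemma frameSimilarity_self {v : E} (hv : v ≠ 0) (x y : E) : frameSimilarity x v x v y = y := by
  simp [frameSimilarity, directionRotation_self hv, div_self (norm_ne_zero_iff.2 hv)]

lemma continuousAt_frameSimilarity {v : E} (hv : v ≠ 0) (x y : E) :
    ContinuousAt (fun q : (E × E) × E => frameSimilarity x v q.1.1 q.1.2 q.2) ((x, v), y) := by
  have hw : ‖v‖ • v + ‖v‖ • v ≠ 0 := by
    rw [← add_smul]
    exact smul_ne_zero (by simpa using hv) hv
  have haxis : Continuous fun q : (E × E) × E => ‖q.1.2‖ • v + ‖v‖ • q.1.2 := by fun_prop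
  have hpoint : Continuous fun q : (E × E) × E => (ℝ ∙ v).reflection (q.2 - x) :=
    (ℝ ∙ v).reflection.continuous.comp (by fun_prop)
  have hratio : Continuous fun q : (E × E) × E => ‖q.1.2‖ / ‖v‖ := by fun_prop
  have hbase : Continuous fun q : (E × E) × E => q.1.1 := by fun_prop
  exact hbase.continuousAt.add (hratio.continuousAt.smul
    (continuousAt_reflection_singleton haxis.continuousAt hpoint.continuousAt hw))

lemma eventually_mapsTo_frameSimilarity {D K : Set E} (hD : IsOpen D) (hK : IsCompact K)
    (hKD : K ⊆ D) {v : E} (hv : v ≠ 0) (x : E) :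
    ∀ᶠ q : E × E in nhds (x, v), MapsTo (frameSimilarity x v q.1 q.2) K D := by
  refine hK.eventually_forall_of_forall_eventually fun y hy => ?_
  refine (continuousAt_frameSimilarity hv x y).eventually_mem (hD.mem_nhds ?_)
  rw [frameSimilarity_self hv]
  exact hKD hy

end FrameSimilarity

section UpperSemicontinuity

variable {d : ℕ} {D : Set (Euc d)} {x v : Euc d} {r : ℝ} {f : Euc 2 → Euc d}

lemma IsCompetitor.shrink (h : IsCompetitor D x v r f) {ρ : ℝ} (hρ : 0 < ρ) (hρ1 : ρ ≤ 1) :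
    IsCompetitor (f '' closedBall 0 ρ) x v (ρ * r) fun z => f (ρ • z) where
  pos := mul_pos hρ h.pos
  conformalHarmonic := h.conformalHarmonic.comp_smul hρ.ne' (by rwa [abs_of_pos hρ])
  mapsTo z hz := by
    refine mem_image_of_mem f (mem_closedBall_zero_iff.2 ?_)
    rw [norm_smul, Real.norm_of_nonneg hρ.le]
    exact mul_le_of_le_one_right hρ.le (mem_unitDisk_iff_norm_lt_one.1 hz).le
  map_zero := by rw [smul_zero, h.map_zero]
  pd_zero := by rw [pd_comp_smul, smul_zero, h.pd_zero, smul_smul]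

lemma IsCompetitor.frameSimilarity_comp (h : IsCompetitor D x v r f) (hv : v ≠ 0)
    {D' : Set (Euc d)} {x' v' : Euc d} (hD' : MapsTo (frameSimilarity x v x' v') D D') :
    IsCompetitor D' x' v' r (frameSimilarity x v x' v' ∘ f) where
  pos := h.pos
  conformalHarmonic := h.conformalHarmonic.add_smul_sub x' x (‖v'‖ / ‖v‖) (directionRotation v v')
  mapsTo := hD'.comp h.mapsTo
  map_zero := by simp [frameSimilarity, h.map_zero]
  pd_zero := by
    have hdiff := h.conformalHarmonic.differentiableAt zero_mem_unitDisk
    refine (pd_add_smul_sub 0 hdiff x' x (‖v'‖ / ‖v‖) (directionRotation v v')).trans ?_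
    rw [h.pd_zero, map_smul, smul_comm, div_eq_inv_mul, mul_smul,
      norm_smul_directionRotation_self, inv_smul_smul₀ (norm_ne_zero_iff.2 hv)]

lemma upperSemicontinuousAt_minMetric_of_ne_zero (hd : 2 ≤ d) (hD : IsOpen D) (hx : x ∈ D)
    (hv : v ≠ 0) : UpperSemicontinuousAt (fun q : Euc d × Euc d => minMetric D q.1 q.2) (x, v) := by
  intro c hc
  obtain ⟨r, f, hf, hrc⟩ := exists_isCompetitor_of_minMetric_lt hd hD hx hc
  have hlim : ContinuousAt (fun ρ : ℝ => 1 / (ρ * r)) 1 :=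
    continuousAt_const.div (by fun_prop) (by simpa using hf.pos.ne')
  have hnear : ∀ᶠ ρ : ℝ in nhdsWithin 1 (Iio 1), 1 / (ρ * r) < c :=
    (hlim.eventually_lt continuousAt_const (by simpa using hrc)).filter_mono nhdsWithin_le_nhds
  obtain ⟨ρ, hρc, hρ0, hρ1⟩ := (hnear.and (Ioo_mem_nhdsLT one_pos)).exists
  have hball : closedBall (0 : Euc 2) ρ ⊆ unitDisk := closedBall_subset_ball hρ1
  have hK : IsCompact (f '' closedBall 0 ρ) := (isCompact_closedBall 0 ρ).image_of_continuousOn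
    fun z hz => (hf.conformalHarmonic.continuousAt (hball hz)).continuousWithinAt
  have hKD : f '' closedBall 0 ρ ⊆ D := (hf.mapsTo.mono_left hball).image_subset
  filter_upwards [eventually_mapsTo_frameSimilarity hD hK hKD hv x] with q hq
  exact ((hf.shrink hρ0 hρ1.le).frameSimilarity_comp hv hq).minMetric_le.trans_lt hρc

lemma upperSemicontinuousAt_minMetric_zero (hd : 2 ≤ d) (hD : IsOpen D) (hx : x ∈ D) :
    UpperSemicontinuousAt (fun q : Euc d × Euc d => minMetric D q.1 q.2) (x, 0) := by
  intro c hc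
  have hc0 : 0 < c := (minMetric_nonneg D x 0).trans_lt hc
  obtain ⟨R, hR, hball⟩ := Metric.isOpen_iff.1 hD x hx
  have hpoint : ∀ᶠ q : Euc d × Euc d in nhds (x, 0), q.1 ∈ ball x (R / 2) :=
    continuousAt_fst.eventually_mem (ball_mem_nhds x (half_pos hR))
  have hspeed : ∀ᶠ q : Euc d × Euc d in nhds (x, 0), ‖q.2‖ / (R / 2) < c :=
    ContinuousAt.eventually_lt (f := fun q : Euc d × Euc d => ‖q.2‖ / (R / 2)) (by fun_prop)
      continuousAt_const (by simpa using hc0)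
  filter_upwards [hpoint, hspeed] with q hq hqc
  have hsub : ball q.1 (R / 2) ⊆ D :=
    (ball_subset_ball' (by linarith [mem_ball.1 hq])).trans hball
  exact (minMetric_le_of_ball_subset hd (half_pos hR) hsub q.2).trans_lt hqc

lemma upperSemicontinuousAt_minMetric (hd : 2 ≤ d) (hD : IsOpen D) (hx : x ∈ D) (v : Euc d) :
    UpperSemicontinuousAt (fun q : Euc d × Euc d => minMetric D q.1 q.2) (x, v) := by
  rcases eq_or_ne v 0 with rfl | hv
  · exact upperSemicontinuousAt_minMetric_zero hd hD hx
  · exact upperSemicontinuousAt_minMetric_of_ne_zero hd hD hx hv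

end UpperSemicontinuity

section HarnackGradient

open InnerProductSpace

lemma norm_deriv_le_of_re_pos {F : ℂ → ℂ} {c : ℂ} {R : ℝ} (hR : 0 < R)
    (hF : DifferentiableOn ℂ F (ball c R)) (hpos : ∀ z ∈ ball c R, 0 < (F z).re) :
    ‖deriv F c‖ ≤ 2 * (F c).re / R := by
  have hmaps : MapsTo (fun w => c + w) (ball 0 R) (ball c R) := fun w hw => by simpa using hw
  have hFc : 0 < (F c).re := hpos c (mem_ball_self hR)
  have hgrowth : ∀ w ∈ ball (0 : ℂ) R, ‖F c - F (c + w)‖ ≤ 2 * (F c).re * ‖w‖ / (R - ‖w‖) :=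
    fun w hw => Complex.borelCaratheodory_zero hFc
      ((hF.comp (differentiableOn_id.const_add c) hmaps).const_sub (F c))
      (fun z hz => by simpa using (hpos _ (hmaps hz)).le) hR hw (by simp)
  have hderiv : HasDerivAt F (deriv F c) c :=
    (hF.differentiableAt (ball_mem_nhds c hR)).hasDerivAt
  refine le_of_forall_gt_imp_ge_of_dense fun C hC => ?_
  have hC0 : 0 < C := (by positivity : 0 < 2 * (F c).re / R).trans hC
  refine hderiv.le_of_lip' hC0.le ?_
  have hlim : Tendsto (fun z => 2 * (F c).re / (R - ‖z - c‖)) (nhds c)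
      (nhds (2 * (F c).re / R)) := by
    have : ContinuousAt (fun z => 2 * (F c).re / (R - ‖z - c‖)) c :=
      ContinuousAt.div (by fun_prop) (by fun_prop) (by simpa using hR.ne')
    simpa [ContinuousAt] using this
  filter_upwards [hlim.eventually_le_const hC, ball_mem_nhds c hR] with z hz hzR
  calc ‖F z - F c‖ = ‖F c - F (c + (z - c))‖ := by rw [norm_sub_rev, add_sub_cancel]
    _ ≤ 2 * (F c).re / (R - ‖z - c‖) * ‖z - c‖ := by
      rw [div_mul_eq_mul_div]
      exact hgrowth _ (by simpa [dist_eq_norm] using hzR)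
    _ ≤ C * ‖z - c‖ := by gcongr

lemma norm_fderiv_le_of_harmonicOnNhd_of_pos {u : ℂ → ℝ} {c : ℂ} {R : ℝ} (hR : 0 < R)
    (hu : HarmonicOnNhd u (ball c R)) (hpos : ∀ z ∈ ball c R, 0 < u z) :
    ‖fderiv ℝ u c‖ ≤ 2 * u c / R := by
  obtain ⟨F, hF, hre⟩ := hu.exists_analyticOnNhd_ball_re_eq
  have hre' : ∀ z ∈ ball c R, (F z).re = u z := fun z hz => hre hz
  have hc : c ∈ ball c R := mem_ball_self hR
  have hgrad : HasFDerivAt u (Complex.reCLM ∘L (fderiv ℂ F c).restrictScalars ℝ) c :=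
    (Complex.reCLM.hasFDerivAt.comp c
      ((hF c hc).differentiableAt.hasFDerivAt.restrictScalars ℝ)).congr_of_eventuallyEq
        (eventually_of_mem (isOpen_ball.mem_nhds hc) fun z hz => (hre' z hz).symm)
  calc ‖fderiv ℝ u c‖ = ‖Complex.reCLM ∘L (fderiv ℂ F c).restrictScalars ℝ‖ := by
        rw [hgrad.fderiv]
    _ ≤ ‖Complex.reCLM‖ * ‖(fderiv ℂ F c).restrictScalars ℝ‖ :=
        ContinuousLinearMap.opNorm_comp_le _ _
    _ = ‖deriv F c‖ := by
        rw [Complex.reCLM_norm, one_mul, ContinuousLinearMap.norm_restrictScalars,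
          norm_deriv_eq_norm_fderiv]
    _ ≤ 2 * (F c).re / R := norm_deriv_le_of_re_pos hR hF.differentiableOn fun z hz =>
        (hpos z hz).trans_eq (hre' z hz).symm
    _ = 2 * u c / R := by rw [hre' c hc]

lemma norm_fderiv_zero_le_of_harmonicOnNhd_unitDisk {u : Euc 2 → ℝ}
    (hu : HarmonicOnNhd u unitDisk) (hpos : ∀ z ∈ unitDisk, 0 < u z) :
    ‖fderiv ℝ u 0‖ ≤ 2 * u 0 := by
  let e : ℂ ≃ₗᵢ[ℝ] Euc 2 := Complex.orthonormalBasisOneI.repr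
  have he {z : ℂ} (hz : z ∈ ball 0 1) : e z ∈ unitDisk := by
    rwa [mem_unitDisk_iff_norm_lt_one, e.norm_map, ← mem_ball_zero_iff]
  have hharm : HarmonicOnNhd (u ∘ e) (ball 0 1) := fun z hz => by
    simpa [Function.comp_def] using harmonicAt_comp_smul_linearIsometryEquiv e one_ne_zero
      (x := z) (by simpa using hu _ (he hz))
  have hgrad := norm_fderiv_le_of_harmonicOnNhd_of_pos one_pos hharm fun z hz => hpos _ (he hz)
  have hfderiv : fderiv ℝ (u ∘ e) 0
      = fderiv ℝ u 0 ∘L (e.toContinuousLinearEquiv : ℂ →L[ℝ] Euc 2) := by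
    simpa using e.toContinuousLinearEquiv.comp_right_fderiv (f := u) (x := 0)
  rw [hfderiv] at hgrad
  simpa using hgrad

end HarnackGradient

section HalfSpaceComparison

variable {d : ℕ} {D : Set (Euc d)} {x : Euc d} {l : Euc d →L[ℝ] ℝ} {c : ℝ}

lemma ConformalHarmonicOnDisk.abs_map_pd_zero_le {f : Euc 2 → Euc d}
    (hf : ConformalHarmonicOnDisk f) (hl : ∀ z ∈ unitDisk, l (f z) < c) :
    |l (pd 0 f 0)| ≤ 2 * (c - l (f 0)) := by
  have hgrad := norm_fderiv_zero_le_of_harmonicOnNhd_unitDisk (u := fun z => c - l (f z))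
    ((InnerProductSpace.harmonicOnNhd_const c).sub (hf.harmonicOnNhd.comp_CLM l))
    fun z hz => sub_pos.2 (hl z hz)
  have hpd : fderiv ℝ (fun z => c - l (f z)) 0 (EuclideanSpace.single 0 1) = -l (pd 0 f 0) := by
    have h := (l.hasFDerivAt.comp 0
      (hf.differentiableAt zero_mem_unitDisk).hasFDerivAt).const_sub c
    exact DFunLike.congr_fun h.fderiv _
  calc |l (pd 0 f 0)|
      = ‖fderiv ℝ (fun z => c - l (f z)) 0 (EuclideanSpace.single 0 1)‖ := by
        rw [hpd, norm_neg, Real.norm_eq_abs]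
    _ ≤ ‖fderiv ℝ (fun z => c - l (f z)) 0‖ * ‖EuclideanSpace.single (0 : Fin 2) (1 : ℝ)‖ :=
        ContinuousLinearMap.le_opNorm _ _
    _ ≤ 2 * (c - l (f 0)) := by simpa using hgrad

lemma abs_div_two_mul_sub_le_minMetric (hd : 2 ≤ d) (hD : IsOpen D) (hx : x ∈ D)
    (hl : ∀ y ∈ D, l y < c) (v : Euc d) : |l v| / (2 * (c - l x)) ≤ minMetric D x v := by
  refine le_minMetric hd hD hx fun r f h => ?_
  have hgrad := h.conformalHarmonic.abs_map_pd_zero_le fun z hz => hl _ (h.mapsTo hz)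
  rw [h.map_zero, h.pd_zero, map_smul, smul_eq_mul, abs_mul, abs_of_pos h.pos] at hgrad
  have hcx : 0 < c - l x := sub_pos.2 (hl x hx)
  rw [div_le_div_iff₀ (by positivity) h.pos]
  linarith

end HalfSpaceComparison

section PiecewiseC1

lemma exists_mem_Ioo_of_notMem_range {α : Type*} [LinearOrder α] {n : ℕ} {t : Fin (n + 1) → α}
    {x : α} (hx : x ∈ Icc (t 0) (t (Fin.last n))) (hxt : x ∉ range t) :
    ∃ i : Fin n, x ∈ Ioo (t i.castSucc) (t i.succ) := by
  have hne (j) : t j ≠ x := fun h => hxt ⟨j, h⟩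
  by_contra! hgap
  have hlt (j) : t j < x := by
    induction j using Fin.induction with
    | zero => exact hx.1.lt_of_ne (hne 0)
    | succ j ih => exact (not_lt.1 fun h => hgap j ⟨ih, h⟩).lt_of_ne (hne j.succ)
  exact hx.2.not_gt (hlt (Fin.last n))

lemma piecewiseC1On_of_contDiff {d : ℕ} {γ : ℝ → Euc d} (hγ : ContDiff ℝ 1 γ) {a b : ℝ}
    (hab : a ≤ b) : PiecewiseC1On γ a b := by
  refine ⟨hγ.continuous.continuousOn, 0, ![a, b], ?_, rfl, rfl, fun _ => hγ.contDiffOn⟩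
  simpa [Fin.monotone_iff_le_succ] using hab

lemma exists_norm_deriv_le_of_contDiffOn_Icc {E : Type*} [NormedAddCommGroup E] [NormedSpace ℝ E]
    {γ : ℝ → E} {a b : ℝ} (hγ : ContDiffOn ℝ 1 γ (Icc a b)) :
    ∃ M, ∀ x ∈ Ioo a b, ‖deriv γ x‖ ≤ M := by
  rcases le_or_gt b a with hba | hab
  · exact ⟨0, by simp [Ioo_eq_empty_of_le hba]⟩
  obtain ⟨M, hM⟩ := isCompact_Icc.exists_bound_of_continuousOn
    (hγ.continuousOn_derivWithin (uniqueDiffOn_Icc hab) le_rfl)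
  refine ⟨M, fun x hx => ?_⟩
  rw [← derivWithin_of_mem_nhds (Icc_mem_nhds hx.1 hx.2)]
  exact hM x (Ioo_subset_Icc_self hx)

lemma PiecewiseC1On.exists_finite_norm_deriv_le {d : ℕ} {γ : ℝ → Euc d} {a b : ℝ}
    (hγ : PiecewiseC1On γ a b) : ∃ S : Set ℝ, S.Finite ∧ ∃ M, ∀ x ∈ Icc a b \ S,
      DifferentiableAt ℝ γ x ∧ ‖deriv γ x‖ ≤ M := by
  obtain ⟨-, n, t, -, rfl, rfl, hC⟩ := hγ
  choose M hM using fun i => exists_norm_deriv_le_of_contDiffOn_Icc (hC i)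
  obtain ⟨C, hC'⟩ := (finite_range M).bddAbove
  refine ⟨range t, finite_range t, C, fun x hx => ?_⟩
  obtain ⟨i, hi⟩ := exists_mem_Ioo_of_notMem_range hx.1 hx.2
  exact ⟨((hC i).contDiffAt (Icc_mem_nhds hi.1 hi.2)).differentiableAt one_ne_zero,
    (hM i x hi).trans (hC' (mem_range_self i))⟩

end PiecewiseC1

section MinimalLength

open MeasureTheory

variable {d : ℕ} {D : Set (Euc d)} {x y : Euc d} {γ : ℝ → Euc d}

/-- The minimal length of a curve parametrised by `[0, 1]`. It is a Bochner integral, hence `0` if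
the integrand is not integrable. -/
def minLength (D : Set (Euc d)) (γ : ℝ → Euc d) : ℝ :=
  ∫ t in (0 : ℝ)..1, minMetric D (γ t) (deriv γ t)

/-- `γ` competes in the infimum defining `minDist D x y`, to which it contributes
`minLength D γ`. -/
structure IsConnectingCurve (D : Set (Euc d)) (x y : Euc d) (γ : ℝ → Euc d) : Prop where
  piecewiseC1On : PiecewiseC1On γ 0 1
  mapsTo : MapsTo γ (Icc 0 1) D
  map_zero : γ 0 = x
  map_one : γ 1 = y

lemma minDist_eq_sInf_minLength (D : Set (Euc d)) (x y : Euc d) :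
    minDist D x y = sInf (minLength D '' {γ | IsConnectingCurve D x y γ}) := by
  refine congrArg sInf (Set.ext fun L => ⟨?_, ?_⟩)
  · rintro ⟨γ, hγ, hγD, hγ0, hγ1, rfl⟩
    exact ⟨γ, ⟨hγ, hγD, hγ0, hγ1⟩, rfl⟩
  · rintro ⟨γ, h, rfl⟩
    exact ⟨γ, h.piecewiseC1On, h.mapsTo, h.map_zero, h.map_one, rfl⟩

lemma minLength_nonneg (D : Set (Euc d)) (γ : ℝ → Euc d) : 0 ≤ minLength D γ :=
  intervalIntegral.integral_nonneg zero_le_one fun _ _ => minMetric_nonneg D _ _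

lemma IsConnectingCurve.minDist_le_minLength (h : IsConnectingCurve D x y γ) :
    minDist D x y ≤ minLength D γ := by
  rw [minDist_eq_sInf_minLength]
  refine csInf_le ⟨0, ?_⟩ (mem_image_of_mem _ h)
  rintro _ ⟨γ, -, rfl⟩
  exact minLength_nonneg D γ

lemma IsConnectingCurve.minDist_le {C : ℝ} (h : IsConnectingCurve D x y γ)
    (hC : ∀ t ∈ Icc (0 : ℝ) 1, minMetric D (γ t) (deriv γ t) ≤ C) : minDist D x y ≤ C := by
  have hbound := intervalIntegral.norm_integral_le_of_norm_le_const (a := (0 : ℝ)) (b := 1)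
    (f := fun t => minMetric D (γ t) (deriv γ t)) (C := C) fun t ht => by
      rw [uIoc_of_le zero_le_one] at ht
      rw [Real.norm_of_nonneg (minMetric_nonneg D _ _)]
      exact hC t (Ioc_subset_Icc_self ht)
  calc minDist D x y ≤ minLength D γ := h.minDist_le_minLength
    _ ≤ ‖minLength D γ‖ := Real.le_norm_self _
    _ ≤ C := by simpa only [minLength, sub_zero, abs_one, mul_one] using hbound

lemma exists_isConnectingCurve_of_convex (hD : Convex ℝ D) (hx : x ∈ D) (hy : y ∈ D) :
    ∃ γ, IsConnectingCurve D x y γ :=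
  ⟨AffineMap.lineMap x y, piecewiseC1On_of_contDiff (AffineMap.contDiff_lineMap x y) zero_le_one,
    fun _ ht => hD.lineMap_mem hx hy ht, AffineMap.lineMap_apply_zero x y,
    AffineMap.lineMap_apply_one x y⟩

lemma measurable_indicator_minMetric (hd : 2 ≤ d) (hD : IsOpen D) :
    Measurable ((D ×ˢ univ).indicator fun q : Euc d × Euc d => minMetric D q.1 q.2) := by
  have hs : MeasurableSet (D ×ˢ (univ : Set (Euc d))) := (hD.prod isOpen_univ).measurableSet
  have husc : UpperSemicontinuousOn (fun q : Euc d × Euc d => minMetric D q.1 q.2)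
      (D ×ˢ univ) := fun q hq =>
    (upperSemicontinuousAt_minMetric hd hD hq.1 q.2).upperSemicontinuousWithinAt _
  classical
  rw [← piecewise_eq_indicator]
  refine measurable_of_restrict_of_restrict_compl hs ?_ ?_
  · rw [domRestrict_piecewise]
    exact (upperSemicontinuousOn_iff_restrict.2 husc).measurable
  · rw [domRestrict_piecewise_compl]
    exact measurable_const

lemma integrableOn_minMetric_deriv (hd : 2 ≤ d) (hD : IsOpen D) {a b : ℝ}
    (hγ : PiecewiseC1On γ a b) (hγD : MapsTo γ (Icc a b) D) :
    IntegrableOn (fun t => minMetric D (γ t) (deriv γ t)) (Icc a b) := by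
  obtain ⟨S, hS, M, hM⟩ := hγ.exists_finite_norm_deriv_le
  obtain ⟨δ, hδ, hthick⟩ := (isCompact_Icc.image_of_continuousOn hγ.1).exists_thickening_subset_open
    hD hγD.image_subset
  have hmeas : AEStronglyMeasurable (fun t => minMetric D (γ t) (deriv γ t))
      (volume.restrict (Icc a b)) := by
    refine ((measurable_indicator_minMetric hd hD).comp_aemeasurable
      ((hγ.1.aemeasurable measurableSet_Icc).prodMk
        (measurable_deriv γ).aemeasurable)).aestronglyMeasurable.congr ?_
    filter_upwards [ae_restrict_mem measurableSet_Icc] with t ht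
    exact indicator_of_mem (mk_mem_prod (hγD ht) (mem_univ (deriv γ t))) _
  refine Integrable.of_bound hmeas (M / δ) ?_
  filter_upwards [ae_restrict_mem measurableSet_Icc,
    ae_restrict_of_ae (hS.countable.ae_notMem volume)] with t ht htS
  have hball : ball (γ t) δ ⊆ D :=
    (ball_subset_thickening (mem_image_of_mem γ ht) δ).trans hthick
  rw [Real.norm_of_nonneg (minMetric_nonneg D _ _)]
  calc minMetric D (γ t) (deriv γ t) ≤ ‖deriv γ t‖ / δ :=
        minMetric_le_of_ball_subset hd hδ hball _
    _ ≤ M / δ := by gcongr; exact (hM t ⟨ht, htS⟩).2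

end MinimalLength

section LogarithmicLowerBound

open MeasureTheory

lemma norm_sub_le_integral_of_norm_deriv_le_off_countable {E : Type*} [NormedAddCommGroup E]
    [NormedSpace ℝ E] [CompleteSpace E] {u : ℝ → E} {g : ℝ → ℝ} {a b : ℝ} {S : Set ℝ}
    (hab : a ≤ b) (hS : S.Countable) (hu : ContinuousOn u (Icc a b))
    (hdiff : ∀ x ∈ Ioo a b \ S, DifferentiableAt ℝ u x)
    (hle : ∀ x ∈ Ioo a b \ S, ‖deriv u x‖ ≤ g x) (hg : IntervalIntegrable g volume a b) :
    ‖u b - u a‖ ≤ ∫ x in a..b, g x := by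
  have hae : ∀ᵐ x, x ∈ Ioc a b → ‖deriv u x‖ ≤ g x := by
    filter_upwards [(hS.insert b).ae_notMem volume] with x hx hxab
    rw [mem_insert_iff, not_or] at hx
    exact hle x ⟨⟨hxab.1, hxab.2.lt_of_ne hx.1⟩, hx.2⟩
  have hint : IntervalIntegrable (deriv u) volume a b :=
    hg.mono_fun' (aestronglyMeasurable_deriv u _) <| by
      rw [uIoc_of_le hab]
      exact (ae_restrict_iff' measurableSet_Ioc).2 hae
  rw [← integral_eq_of_hasDerivAt_off_countable_of_le u (deriv u) hab hS hu
    (fun x hx => (hdiff x hx).hasDerivAt) hint]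
  exact intervalIntegral.norm_integral_le_of_norm_le hab hae hg

variable {d : ℕ} {D : Set (Euc d)} {x y : Euc d} {l : Euc d →L[ℝ] ℝ} {c : ℝ}

lemma IsConnectingCurve.abs_log_sub_log_le (hd : 2 ≤ d) (hD : IsOpen D)
    (hl : ∀ z ∈ D, l z < c) {γ : ℝ → Euc d} (hγ : IsConnectingCurve D x y γ) :
    |Real.log (c - l y) - Real.log (c - l x)| ≤ 2 * minLength D γ := by
  obtain ⟨S, hS, M, hM⟩ := hγ.piecewiseC1On.exists_finite_norm_deriv_le
  have hpos : ∀ t ∈ Icc (0 : ℝ) 1, 0 < c - l (γ t) := fun t ht => sub_pos.2 (hl _ (hγ.mapsTo ht))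
  have hderiv : ∀ t ∈ Ioo (0 : ℝ) 1 \ S, HasDerivAt (fun t => Real.log (c - l (γ t)))
      (-l (deriv γ t) / (c - l (γ t))) t := fun t ht =>
    have ht' := Ioo_subset_Icc_self ht.1
    ((l.hasFDerivAt.comp_hasDerivAt t (hM t ⟨ht', ht.2⟩).1.hasDerivAt).const_sub c).log
      (hpos t ht').ne'
  have hbound : ∀ t ∈ Ioo (0 : ℝ) 1 \ S, ‖deriv (fun t => Real.log (c - l (γ t))) t‖
      ≤ 2 * minMetric D (γ t) (deriv γ t) := by
    intro t ht
    have ht' := Ioo_subset_Icc_self ht.1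
    rw [(hderiv t ht).deriv, Real.norm_eq_abs, abs_div, abs_neg, abs_of_pos (hpos t ht')]
    calc |l (deriv γ t)| / (c - l (γ t)) = 2 * (|l (deriv γ t)| / (2 * (c - l (γ t)))) := by
          field_simp
      _ ≤ 2 * minMetric D (γ t) (deriv γ t) := by
          gcongr
          exact abs_div_two_mul_sub_le_minMetric hd hD (hγ.mapsTo ht') hl _
  have hcont : ContinuousOn (fun t => Real.log (c - l (γ t))) (Icc 0 1) :=
    (continuousOn_const.sub (l.continuous.comp_continuousOn hγ.piecewiseC1On.1)).log
      fun t ht => (hpos t ht).ne'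
  have hint : IntervalIntegrable (fun t => minMetric D (γ t) (deriv γ t)) volume 0 1 :=
    (intervalIntegrable_iff_integrableOn_Icc_of_le zero_le_one).2
      (integrableOn_minMetric_deriv hd hD hγ.piecewiseC1On hγ.mapsTo)
  have h := norm_sub_le_integral_of_norm_deriv_le_off_countable zero_le_one hS.countable hcont
    (fun t ht => (hderiv t ht).differentiableAt) hbound (hint.const_mul 2)
  rwa [hγ.map_zero, hγ.map_one, Real.norm_eq_abs, intervalIntegral.integral_const_mul] at h

lemma abs_log_sub_log_le_two_mul_minDist (hd : 2 ≤ d) (hD : IsOpen D) (hconv : Convex ℝ D)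
    (hl : ∀ z ∈ D, l z < c) (hx : x ∈ D) (hy : y ∈ D) :
    |Real.log (c - l y) - Real.log (c - l x)| ≤ 2 * minDist D x y := by
  rw [← div_le_iff₀' two_pos, minDist_eq_sInf_minLength]
  refine le_csInf (Nonempty.image _ (exists_isConnectingCurve_of_convex hconv hx hy)) ?_
  rintro _ ⟨γ, hγ, rfl⟩
  exact (div_le_iff₀' two_pos).2 (hγ.abs_log_sub_log_le hd hD hl)

end LogarithmicLowerBound

lemma exists_plane_of_lt_deltaHat {d : ℕ} {D : Set (Euc d)} {x v : Euc d} {R : ℝ}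
    (hR : ENNReal.ofReal R < deltaHat D x v) :
    ∃ Λ : Submodule ℝ (Euc d), Module.finrank ℝ Λ = 2 ∧ v ∈ Λ ∧
      ∀ y ∈ Λ, ‖y‖ < R → x + y ∈ D := by
  simp only [deltaHat, lt_iSup_iff] at hR
  obtain ⟨Λ, hΛ, hv, hR⟩ := hR
  refine ⟨Λ, hΛ, hv, fun y hy hyR => by_contra fun hyD => ?_⟩
  have hlt := hR.trans_le (iInf₂_le (x + y) ⟨by simpa using hy, hyD⟩)
  rw [edist_dist, dist_self_add_right] at hlt
  exact hyR.not_ge (ENNReal.ofReal_lt_ofReal_iff'.1 hlt).1.le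

section BoundaryRay

variable {d : ℕ} {D : Set (Euc d)} {p ξ : Euc d} {s t : ℝ}

/-- The segment from `p` to `ξ`, parametrised so that the distance to `ξ` decays like `e^{-2τ}`. -/
def boundaryRay (p ξ : Euc d) (τ : ℝ) : Euc d := ξ + Real.exp (-2 * τ) • (p - ξ)

lemma exp_neg_two_mul_mem_Ioc {τ : ℝ} (hτ : 0 ≤ τ) : Real.exp (-2 * τ) ∈ Ioc (0 : ℝ) 1 :=
  ⟨Real.exp_pos _, Real.exp_le_one_iff.2 (by linarith)⟩

lemma add_smul_sub_mem_of_mem_closure (hD : IsOpen D) (hconv : Convex ℝ D) (hξ : ξ ∈ closure D)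
    (hp : p ∈ D) {k : ℝ} (hk : k ∈ Ioc (0 : ℝ) 1) : ξ + k • (p - ξ) ∈ D := by
  simpa only [hD.interior_eq] using
    hconv.add_smul_sub_mem_interior' hξ (hD.interior_eq.symm ▸ hp) hk

lemma boundaryRay_mem (hD : IsOpen D) (hconv : Convex ℝ D) (hξ : ξ ∈ closure D) (hp : p ∈ D)
    {τ : ℝ} (hτ : 0 ≤ τ) : boundaryRay p ξ τ ∈ D :=
  add_smul_sub_mem_of_mem_closure hD hconv hξ hp (exp_neg_two_mul_mem_Ioc hτ)

lemma contDiff_boundaryRay (p ξ : Euc d) : ContDiff ℝ 1 (boundaryRay p ξ) := by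
  unfold boundaryRay
  fun_prop

lemma hasDerivAt_boundaryRay (p ξ : Euc d) (τ : ℝ) :
    HasDerivAt (boundaryRay p ξ) ((-2 * Real.exp (-2 * τ)) • (p - ξ)) τ := by
  have hexp : HasDerivAt (fun τ : ℝ => Real.exp (-2 * τ)) (-2 * Real.exp (-2 * τ)) τ := by
    simpa [mul_comm] using ((hasDerivAt_id τ).const_mul (-2)).exp
  exact (hexp.smul_const (p - ξ)).const_add ξ

lemma isConnectingCurve_boundaryRay (hD : IsOpen D) (hconv : Convex ℝ D) (hξ : ξ ∈ closure D)
    (hp : p ∈ D) (hs : 0 ≤ s) (ht : 0 ≤ t) :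
    IsConnectingCurve D (boundaryRay p ξ s) (boundaryRay p ξ t)
      (boundaryRay p ξ ∘ AffineMap.lineMap s t) where
  piecewiseC1On := piecewiseC1On_of_contDiff
    ((contDiff_boundaryRay p ξ).comp (AffineMap.contDiff_lineMap s t)) zero_le_one
  mapsTo _ hu := boundaryRay_mem hD hconv hξ hp ((convex_Ici (0 : ℝ)).lineMap_mem hs ht hu)
  map_zero := by rw [Function.comp_apply, AffineMap.lineMap_apply_zero]
  map_one := by rw [Function.comp_apply, AffineMap.lineMap_apply_one]

variable {Λ : Submodule ℝ (Euc d)} {R : ℝ}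

lemma minMetric_add_smul_sub_le (hD : IsOpen D) (hconv : Convex ℝ D) (hξ : ξ ∈ closure D)
    (hΛ : 2 ≤ Module.finrank ℝ Λ) (hΛD : ∀ y ∈ Λ, ‖y‖ < R → p + y ∈ D) (hR : 0 < R) {v : Euc d}
    (hv : v ∈ Λ) {k : ℝ} (hk : k ∈ Ioc (0 : ℝ) 1) :
    minMetric D (ξ + k • (p - ξ)) v ≤ ‖v‖ / (k * R) := by
  have hk0 : 0 < k := hk.1
  refine minMetric_le_of_plane hΛ hv (fun y hy hyR => ?_) (by positivity)
  have hdisk : p + k⁻¹ • y ∈ D := by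
    refine hΛD _ (Λ.smul_mem _ hy) ?_
    rwa [norm_smul, Real.norm_of_nonneg (by positivity), inv_mul_lt_iff₀ hk0]
  convert add_smul_sub_mem_of_mem_closure hD hconv hξ hdisk hk using 1
  rw [add_sub_right_comm, smul_add, smul_inv_smul₀ hk0.ne', add_assoc]

lemma minDist_boundaryRay_le (hD : IsOpen D) (hconv : Convex ℝ D) (hξ : ξ ∈ closure D)
    (hΛ : 2 ≤ Module.finrank ℝ Λ) (hΛξ : ξ - p ∈ Λ) (hΛD : ∀ y ∈ Λ, ‖y‖ < R → p + y ∈ D)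
    (hR : 0 < R) (hs : 0 ≤ s) (ht : 0 ≤ t) :
    minDist D (boundaryRay p ξ s) (boundaryRay p ξ t) ≤ 2 * ‖ξ - p‖ / R * |t - s| := by
  have hp : p ∈ D := by simpa using hΛD 0 Λ.zero_mem (by simpa using hR)
  refine (isConnectingCurve_boundaryRay hD hconv hξ hp hs ht).minDist_le fun u hu => ?_
  set τ := AffineMap.lineMap s t u
  have hk := exp_neg_two_mul_mem_Ioc ((convex_Ici (0 : ℝ)).lineMap_mem hs ht hu : 0 ≤ τ)
  have hline : HasDerivAt (AffineMap.lineMap s t : ℝ → ℝ) (t - s) u :=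
    AffineMap.hasDerivAt_lineMap
  have hderiv : deriv (boundaryRay p ξ ∘ AffineMap.lineMap s t) u
      = (2 * (t - s) * Real.exp (-2 * τ)) • (ξ - p) := by
    rw [((hasDerivAt_boundaryRay p ξ τ).scomp u hline).deriv]
    module
  rw [hderiv]
  refine (minMetric_add_smul_sub_le hD hconv hξ hΛ hΛD hR (Λ.smul_mem _ hΛξ) hk).trans_eq ?_
  rw [norm_smul, norm_mul, norm_mul, Real.norm_of_nonneg hk.1.le, Real.norm_ofNat,
    Real.norm_eq_abs]
  have := hk.1.ne'
  field_simp

lemma abs_sub_le_minDist_boundaryRay (hd : 2 ≤ d) (hD : IsOpen D) (hconv : Convex ℝ D)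
    (hξ : ξ ∈ frontier D) (hp : p ∈ D) (hs : 0 ≤ s) (ht : 0 ≤ t) :
    |t - s| ≤ minDist D (boundaryRay p ξ s) (boundaryRay p ξ t) := by
  obtain ⟨hξD, hξD'⟩ := hD.frontier_eq ▸ hξ
  obtain ⟨l, hl⟩ := geometric_hahn_banach_open_point hconv hD hξD'
  have hlog (τ : ℝ) : Real.log (l ξ - l (boundaryRay p ξ τ))
      = -2 * τ + Real.log (l ξ - l p) := by
    have hscale : l ξ - l (boundaryRay p ξ τ) = Real.exp (-2 * τ) * (l ξ - l p) := by
      simp only [boundaryRay, map_add, map_smul, map_sub, smul_eq_mul]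
      ring
    rw [hscale, Real.log_mul (Real.exp_pos _).ne' (sub_pos.2 (hl p hp)).ne', Real.log_exp]
  have h := abs_log_sub_log_le_two_mul_minDist hd hD hconv hl
    (boundaryRay_mem hD hconv hξD hp hs) (boundaryRay_mem hD hconv hξD hp ht)
  rw [hlog, hlog, add_sub_add_right_eq_sub, ← mul_sub, abs_mul, abs_neg, abs_two] at h
  exact le_of_mul_le_mul_left h two_pos

end BoundaryRay

theorem quasi_geodesic_ray_in_convex_domain_general {d : ℕ} {D : Set (Euc d)} (hD : IsOpen D)
    (hconv : Convex ℝ D) {p ξ : Euc d} (hp : p ∈ D) (hξ : ξ ∈ frontier D) {ε : ℝ} (hε : 0 < ε)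
    (hδ : ENNReal.ofReal (ε * ‖ξ - p‖) ≤ deltaHat D p (ξ - p)) {s t : ℝ} (hs : 0 ≤ s)
    (ht : 0 ≤ t) :
    |t - s| ≤ minDist D (boundaryRay p ξ s) (boundaryRay p ξ t) ∧
      minDist D (boundaryRay p ξ s) (boundaryRay p ξ t) ≤ 2 * ε⁻¹ * |t - s| := by
  have hξp : 0 < ‖ξ - p‖ := by
    rw [norm_pos_iff, sub_ne_zero]
    rintro rfl
    exact (hD.frontier_eq ▸ hξ).2 hp
  have hεξ : 0 < ε * ‖ξ - p‖ := mul_pos hε hξp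
  have hplane {R : ℝ} (hR : R < ε * ‖ξ - p‖) := exists_plane_of_lt_deltaHat
    (((ENNReal.ofReal_lt_ofReal_iff hεξ).2 hR).trans_le hδ)
  constructor
  · obtain ⟨Λ, hΛ, -⟩ := hplane hεξ
    have hd : 2 ≤ d := by simpa [hΛ] using Λ.finrank_le
    exact abs_sub_le_minDist_boundaryRay hd hD hconv hξ hp hs ht
  · -- the supremum in `deltaHat` need not be attained, so the radius `ε ‖ξ - p‖` is a limit
    have hlim : Tendsto (fun R => 2 * ‖ξ - p‖ / R * |t - s|)
        (nhdsWithin (ε * ‖ξ - p‖) (Iio (ε * ‖ξ - p‖)))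
        (nhds (2 * ‖ξ - p‖ / (ε * ‖ξ - p‖) * |t - s|)) :=
      (((continuousAt_const.div continuousAt_id hεξ.ne').mul_const _).tendsto).mono_left
        nhdsWithin_le_nhds
    rw [mul_div_mul_right _ _ hξp.ne', div_eq_mul_inv] at hlim
    refine ge_of_tendsto hlim ?_
    filter_upwards [Ioo_mem_nhdsLT hεξ] with R hR
    obtain ⟨Λ, hΛ, hΛξ, hΛD⟩ := hplane hR.2
    exact minDist_boundaryRay_le hD hconv (frontier_subset_closure hξ) hΛ.ge hΛξ hΛD hR.1 hs ht

/-- Quasi-geodesics in convex domains: if `p ∈ D`, `ξ ∈ ∂D` and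
`δ̂_D(p, ξ-p) ≥ ε‖ξ-p‖`, then `σ(t) = ξ + e^{-2t}(p-ξ)` satisfies
`|t-s| ≤ ρ_D(σ(s),σ(t)) ≤ 2ε⁻¹|t-s|`; in particular it is a `(2ε⁻¹,0)`-quasi-geodesic. -/
theorem quasi_geodesic_ray_in_convex_domain
    (d : ℕ) (hd : 3 ≤ d) (D : Set (Euc d))
    (hOpen : IsOpen D) (hConn : IsConnected D) (hConv : Convex ℝ D)
    (p : Euc d) (hp : p ∈ D) (ξ : Euc d) (hξ : ξ ∈ frontier D)
    (ε : ℝ) (hε : 0 < ε)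
    (hδ : ENNReal.ofReal (ε * ‖ξ - p‖) ≤ deltaHat D p (ξ - p)) :
    ∀ s t : ℝ, 0 ≤ s → 0 ≤ t →
      |t - s| ≤ minDist D (ξ + Real.exp (-2*s) • (p - ξ)) (ξ + Real.exp (-2*t) • (p - ξ)) ∧
      minDist D (ξ + Real.exp (-2*s) • (p - ξ)) (ξ + Real.exp (-2*t) • (p - ξ))
        ≤ 2 * ε⁻¹ * |t - s| := by
  exact fun _ _ => quasi_geodesic_ray_in_convex_domain_general hOpen hConv hp hξ hε hδ
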